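/- Assume in addition that each utility u^i is uniformly continuous on ℝ^d and that A(x) = x + A(0) for all x ∈ ℝ^d. Then for every claim C : Ω → ℝ^d, for every p ∈ bd P^b(C) there is no ε > 0 such that V(x0, 0) + B(0, ε) ⊆ V(x0 − p, C), where B(0, ε) is the open Euclidean ball in ℝ^q; similarly, for every p ∈ bd P^s(C) there is no ε > 0 such that V(x0, 0) + B(0, ε) ⊆ V(x0 + p, −C). -/

import Mathlib

open Pointwise

/-
A uniformly continuous utility loses at most a fixed vector `e` with positive components when the
terminal position is shifted by a small constant, uniformly over all positions. Shifting the
endowment from `x` to a nearby `y` therefore costs the value set at most a translation by `-e`.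
If `V(x₀, 0)` fits into `V(x, C)` with a whole neighbourhood of `0` to spare, choosing `e` in this
neighbourhood shows that it still fits into `V(y, C)`. So a price leaving room is interior to the
set of prices.
-/

open Filter Set
open scoped Topology Uniformity

/-- The vector-valued expected utility `Z ↦ (E_{Q j} (u i Z))_{i, j}`, with the
expectations written as finite sums over the states. -/
def expectedUtility {Ω E ι κ : Type*} [Fintype Ω] (Q : κ → Ω → ℝ) (u : ι → E → ℝ)
    (Z : Ω → E) : ι × κ → ℝ :=
  fun ij => ∑ ω, Q ij.2 ω * u ij.1 (Z ω)

theorem uniformContinuous_expectedUtility {Ω E ι κ : Type*} [Fintype Ω] [UniformSpace E]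
    (Q : κ → Ω → ℝ) {u : ι → E → ℝ} (hu : ∀ i, UniformContinuous (u i)) :
    UniformContinuous (expectedUtility (Ω := Ω) Q u) :=
  uniformContinuous_pi.2 fun ij => Finset.univ.uniformContinuous_sum fun ω _ =>
    ((hu ij.1).comp (Pi.uniformContinuous_proj _ ω)).const_mul' (Q ij.2 ω)

theorem exists_mem_forall_lt_of_mem_nhds {ι : Type*} {α : ι → Type*} [∀ i, Preorder (α i)]
    [∀ i, TopologicalSpace (α i)] {a : ∀ i, α i} [∀ i, (𝓝[>] a i).NeBot] {N : Set (∀ i, α i)}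
    (hN : N ∈ 𝓝 a) : ∃ e ∈ N, ∀ i, a i < e i := by
  rw [nhds_pi, Filter.mem_pi] at hN
  obtain ⟨I, -, t, ht, hIt⟩ := hN
  have hright (i : ι) : ∀ᶠ e in 𝓝[>] a i, e ∈ t i ∧ a i < e :=
    Eventually.and (mem_nhdsWithin_of_mem_nhds (ht i)) self_mem_nhdsWithin
  choose e het hlt using fun i => (hright i).exists
  exact ⟨e, hIt fun i _ => het i, hlt⟩

theorem eventually_forall_map_add_sub_mem {F G : Type*} [AddCommGroup F] [UniformSpace F]
    [IsUniformAddGroup F] [AddCommGroup G] [UniformSpace G] [IsUniformAddGroup G] {f : F → G}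
    (hf : UniformContinuous f) {M : Set G} (hM : M ∈ 𝓝 0) :
    ∀ᶠ h in 𝓝 0, ∀ z, f (z + h) - f z ∈ M := by
  have hpair : ∀ᶠ p in 𝓤 F, f p.2 - f p.1 ∈ M := by
    refine hf.eventually (p := fun q => q.2 - q.1 ∈ M) ?_
    rw [uniformity_eq_comap_nhds_zero]
    exact preimage_mem_comap hM
  rw [uniformity_eq_comap_nhds_zero, eventually_comap] at hpair
  exact hpair.mono fun h hh z => hh (z, z + h) (add_sub_cancel_left z h)

theorem setOf_sqrt_sum_sq_lt_mem_nhds_zero {ι : Type*} [Fintype ι] {ε : ℝ} (hε : 0 < ε) :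
    {v : ι → ℝ | √(∑ i, v i ^ 2) < ε} ∈ 𝓝 0 :=
  (isOpen_lt (by fun_prop) continuous_const).mem_nhds (by simpa using hε)

/-- The value set `V(x, C)`: the closure of the vectors dominated by the utility of some position
attainable from the endowment `x` and combined with the claim `C`. Positions are elements of an
additive structure `F`, such as the random vectors `Ω → E`. -/
def valueSet {E F G : Type*} [Add F] [LE G] [TopologicalSpace G] (U : F → G) (A : E → Set F)
    (x : E) (C : F) : Set G :=
  closure {v | ∃ W ∈ A x, v ≤ U (W + C)}

theorem sub_mem_valueSet {E F G : Type*} [Add F] [AddCommGroup G] [Preorder G] [AddLeftMono G]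
    [TopologicalSpace G] [ContinuousSub G] {U : F → G} {A : E → Set F} {x y : E} {C : F} {e v : G}
    (hloss : ∀ W ∈ A x, ∃ W' ∈ A y, U (W + C) - e ≤ U (W' + C)) (hv : v ∈ valueSet U A x C) :
    v - e ∈ valueSet U A y C := by
  refine map_mem_closure (f := (· - e)) (by fun_prop) hv ?_
  rintro w ⟨W, hW, hw⟩
  obtain ⟨W', hW', hle⟩ := hloss W hW
  exact ⟨W', hW', (sub_le_sub_right hw e).trans hle⟩

section Prices

variable {E F G : Type*} [AddCommGroup E] [AddCommGroup F] [LE G] [TopologicalSpace G]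

/-- The set-valued buy price `P^b(C)`: the prices at which an agent with initial endowment `x₀` can
buy `C` without giving up any attainable utility. -/
def buyPrices (U : F → G) (A : E → Set F) (x₀ : E) (C : F) : Set E :=
  {p | valueSet U A x₀ 0 ⊆ valueSet U A (x₀ - p) C}

/-- The set-valued sell price `P^s(C)`: the prices at which an agent with initial endowment `x₀` can
sell `C` without giving up any attainable utility. -/
def sellPrices (U : F → G) (A : E → Set F) (x₀ : E) (C : F) : Set E :=
  {p | valueSet U A x₀ 0 ⊆ valueSet U A (x₀ + p) (-C)}

end Prices

section TranslationEquivariant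

-- `const` embeds the deterministic positions into the random ones.
variable {E F ι : Type*} [AddCommGroup E] [TopologicalSpace E] [IsTopologicalAddGroup E]
  [AddCommGroup F] [UniformSpace F] [IsUniformAddGroup F] [Finite ι]
  {U : F → ι → ℝ} {const : E → F} {A : E → Set F} {N : Set (ι → ℝ)} {x₀ p : E} {C : F}

theorem eventually_subset_valueSet_of_add_subset (hU : UniformContinuous U)
    (hconst : Tendsto const (𝓝 0) (𝓝 0)) (hA : ∀ x, ∀ W ∈ A x, ∀ c, W + const c ∈ A (x + c))
    (hN : N ∈ 𝓝 0) {T : Set (ι → ℝ)} {x : E} (hT : T + N ⊆ valueSet U A x C) :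
    ∀ᶠ y in 𝓝 x, T ⊆ valueSet U A y C := by
  obtain ⟨e, heN, he⟩ := exists_mem_forall_lt_of_mem_nhds hN
  have hsmall : ∀ᶠ h in 𝓝 0, ∀ Z, -e ≤ U (Z + h) - U Z :=
    eventually_forall_map_add_sub_mem hU (pi_Ici_mem_nhds fun i => neg_neg_of_pos (he i))
  have hshift : Tendsto (fun y => const (y - x)) (𝓝 x) (𝓝 0) :=
    hconst.comp (tendsto_sub_nhds_zero_iff.2 tendsto_id)
  filter_upwards [hshift.eventually hsmall] with y hy v hv
  have hloss : ∀ W ∈ A x, ∃ W' ∈ A y, U (W + C) - e ≤ U (W' + C) := by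
    refine fun W hW => ⟨W + const (y - x), by simpa using hA x W hW (y - x), ?_⟩
    rw [add_right_comm, sub_eq_neg_add, ← le_sub_iff_add_le]
    exact hy (W + C)
  simpa using sub_mem_valueSet hloss (hT (add_mem_add hv heN))

theorem mem_interior_buyPrices_of_add_subset (hU : UniformContinuous U)
    (hconst : Tendsto const (𝓝 0) (𝓝 0)) (hA : ∀ x, ∀ W ∈ A x, ∀ c, W + const c ∈ A (x + c))
    (hN : N ∈ 𝓝 0) (hp : valueSet U A x₀ 0 + N ⊆ valueSet U A (x₀ - p) C) :
    p ∈ interior (buyPrices U A x₀ C) :=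
  mem_interior_iff_mem_nhds.2 <| (continuous_sub_left x₀).continuousAt.eventually <|
    eventually_subset_valueSet_of_add_subset hU hconst hA hN hp

theorem mem_interior_sellPrices_of_add_subset (hU : UniformContinuous U)
    (hconst : Tendsto const (𝓝 0) (𝓝 0)) (hA : ∀ x, ∀ W ∈ A x, ∀ c, W + const c ∈ A (x + c))
    (hN : N ∈ 𝓝 0) (hp : valueSet U A x₀ 0 + N ⊆ valueSet U A (x₀ + p) (-C)) :
    p ∈ interior (sellPrices U A x₀ C) :=
  mem_interior_iff_mem_nhds.2 <| (continuous_const_add x₀).continuousAt.eventually <|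
    eventually_subset_valueSet_of_add_subset hU hconst hA hN hp

end TranslationEquivariant

theorem stmt15_general {E F ι : Type*} [AddCommGroup E] [TopologicalSpace E]
    [IsTopologicalAddGroup E] [AddCommGroup F] [UniformSpace F] [IsUniformAddGroup F] [Finite ι]
    {U : F → ι → ℝ} (hU : UniformContinuous U)
    {const : E → F} (hconst : Tendsto const (𝓝 0) (𝓝 0))
    {A : E → Set F} (hA : ∀ x, ∀ W ∈ A x, ∀ c, W + const c ∈ A (x + c))
    (x₀ : E) (C : F) {N : Set (ι → ℝ)} (hN : N ∈ 𝓝 0) :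
    (∀ p ∈ frontier (buyPrices U A x₀ C),
      ¬ valueSet U A x₀ 0 + N ⊆ valueSet U A (x₀ - p) C) ∧
    (∀ p ∈ frontier (sellPrices U A x₀ C),
      ¬ valueSet U A x₀ 0 + N ⊆ valueSet U A (x₀ + p) (-C)) :=
  ⟨fun _ hp hsub => hp.2 (mem_interior_buyPrices_of_add_subset hU hconst hA hN hsub),
    fun _ hp hsub => hp.2 (mem_interior_sellPrices_of_add_subset hU hconst hA hN hsub)⟩

theorem stmt15
    {d r s : ℕ} (hd : 0 < d) (hr : 0 < r) (hs : 0 < s)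
    {Ω : Type} [Fintype Ω] [Nonempty Ω]
    (Q : Fin s → Ω → ℝ)
    (hQ0 : ∀ j ω, 0 ≤ Q j ω) (hQ1 : ∀ j, ∑ ω : Ω, Q j ω = 1)
    (u : Fin r → (Fin d → ℝ) → ℝ)
    (hcont : ∀ i, Continuous (u i))
    (hconc : ∀ i, ConcaveOn ℝ Set.univ (u i))
    (hmono : ∀ i, Monotone (u i))
    (hstrict : ∀ i (x y : Fin d → ℝ), (∀ k, x k < y k) → u i x < u i y)
    (A : (Fin d → ℝ) → Set (Ω → Fin d → ℝ))
    (hAconv : ∀ x, Convex ℝ (A x))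
    (hAcomb : ∀ (x y : Fin d → ℝ) (a : ℝ), 0 ≤ a → a ≤ 1 →
      a • A x + (1 - a) • A y ⊆ A (a • x + (1 - a) • y))
    (hAmono : ∀ x y : Fin d → ℝ, x ≤ y → A x ⊆ A y)
    (hAtr : ∀ (x : Fin d → ℝ) (W : Ω → Fin d → ℝ), W ∈ A x →
      ∀ c : Fin d → ℝ, (fun ω => W ω + c) ∈ A (x + c))
    (hAcont : ∀ (x : Fin d → ℝ) (xk : ℕ → Fin d → ℝ), Antitone xk →
      Filter.Tendsto xk Filter.atTop (nhds x) → A x = ⋂ n, A (xk n))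
    (hucont : ∀ i, UniformContinuous (u i))
    (hA0 : ∀ x : Fin d → ℝ, A x = (fun (W : Ω → Fin d → ℝ) => fun ω => x + W ω) '' A 0)
    (x0 : Fin d → ℝ) :
    let U : (Ω → Fin d → ℝ) → (Fin r × Fin s → ℝ) :=
      fun W ij => ∑ ω : Ω, Q ij.2 ω * u ij.1 (W ω)
    let V : (Fin d → ℝ) → (Ω → Fin d → ℝ) → Set (Fin r × Fin s → ℝ) :=
      fun x C => closure {v | ∃ W ∈ A x, v ≤ U (W + C)}
    let Pb : (Ω → Fin d → ℝ) → Set (Fin d → ℝ) :=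
      fun C => {p | V x0 0 ⊆ V (x0 - p) C}
    let Ps : (Ω → Fin d → ℝ) → Set (Fin d → ℝ) :=
      fun C => {p | V x0 0 ⊆ V (x0 + p) (-C)}
    ∀ C : Ω → Fin d → ℝ,
      (∀ p ∈ frontier (Pb C), ¬ ∃ ε : ℝ, 0 < ε ∧
        V x0 0 + {v : Fin r × Fin s → ℝ | Real.sqrt (∑ ij, v ij ^ 2) < ε}
          ⊆ V (x0 - p) C) ∧
      (∀ p ∈ frontier (Ps C), ¬ ∃ ε : ℝ, 0 < ε ∧
        V x0 0 + {v : Fin r × Fin s → ℝ | Real.sqrt (∑ ij, v ij ^ 2) < ε}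
          ⊆ V (x0 + p) (-C)) := by
  intro U V Pb Ps C
  have hprices {ε : ℝ} (hε : 0 < ε) :=
    stmt15_general (uniformContinuous_expectedUtility Q hucont)
      (continuous_pi fun _ => continuous_id).continuousAt hAtr x0 C
      (setOf_sqrt_sum_sq_lt_mem_nhds_zero hε)
  exact ⟨fun p hp ⟨_, hε, hsub⟩ => (hprices hε).1 p hp hsub,
    fun p hp ⟨_, hε, hsub⟩ => (hprices hε).2 p hp hsub⟩
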